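/- Let ν be a probability measure on ℝ and let T be an unbiased shift of B embedding ν with P₀{T ≥ 0} = 1. Then there exists a minimal unbiased shift T* embedding ν such that P₀{0 ≤ T* ≤ T} = 1. Here an unbiased shift T* with P₀{T* ≥ 0} = 1 is called minimal if every unbiased shift S with P₀{0 ≤ S ≤ T*} = 1 and with B_S having the same distribution as B_{T*} satisfies P₀{S = T*} = 1. -/

import Mathlib

open MeasureTheory ProbabilityTheory

/-- A two-sided standard Brownian motion: a.s. continuous paths, `B₀ = 0`, independent
increments, and `B_t − B_s` centered Gaussian with variance `t − s` for `s < t`. -/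
structure IsTwoSidedBM {Ω : Type*} [MeasurableSpace Ω] (P : Measure Ω) (B : ℝ → Ω → ℝ) :
    Prop where
  aemeas : ∀ t : ℝ, AEMeasurable (B t) P
  cont : ∀ᵐ ω ∂P, Continuous fun t => B t ω
  zero : ∀ᵐ ω ∂P, B 0 ω = 0
  indepIncr : ∀ (n : ℕ) (t : Fin (n + 1) → ℝ), Monotone t →
    iIndepFun
      (fun (i : Fin n) ω => B (t i.succ) ω - B (t i.castSucc) ω) P
  gaussIncr : ∀ s t : ℝ, s < t →
    Measure.map (fun ω => B t ω - B s ω) P = gaussianReal 0 (Real.toNNReal (t - s))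

/-- A random time: a measurable function of the path of `B`. -/
def IsRandomTime {Ω : Type*} [MeasurableSpace Ω] (B : ℝ → Ω → ℝ) (T : Ω → ℝ) : Prop :=
  @Measurable Ω ℝ (MeasurableSpace.comap (fun ω (t : ℝ) => B t ω) inferInstance) _ T

/-- An unbiased shift: a random time `T` such that `(B_{T+t} − B_T)_{t∈ℝ}` is a two-sided
Brownian motion independent of `B_T`. -/
def IsUnbiasedShift {Ω : Type*} [MeasurableSpace Ω] (P : Measure Ω) (B : ℝ → Ω → ℝ)
    (T : Ω → ℝ) : Prop :=
  IsRandomTime B T ∧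
  IsTwoSidedBM P (fun t ω => B (T ω + t) ω - B (T ω) ω) ∧
  IndepFun (fun ω (t : ℝ) => B (T ω + t) ω - B (T ω) ω) (fun ω => B (T ω) ω) P

/-- `T` embeds the distribution `ν`: `B_T` has law `ν`. -/
def Embeds {Ω : Type*} [MeasurableSpace Ω] (P : Measure Ω) (B : ℝ → Ω → ℝ) (T : Ω → ℝ)
    (ν : Measure ℝ) : Prop :=
  Measure.map (fun ω => B (T ω) ω) P = ν

/-- A stopping time with respect to the filtration `(σ(B_s : s ≤ t))_{t ≥ 0}`. -/
def IsBMStoppingTime {Ω : Type*} [MeasurableSpace Ω] (B : ℝ → Ω → ℝ) (T : Ω → ℝ) : Prop :=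
  ∀ t : ℝ, 0 ≤ t →
    MeasurableSet[⨆ s ∈ Set.Iic t, MeasurableSpace.comap (B s) inferInstance] {ω | T ω ≤ t}

/-! Unbiased shifts embedding `ν` are closed under almost sure limits of random times: path
continuity turns convergence of the times into convergence of `B_S` and of the shifted process,
and both laws and independence pass to almost sure limits. In particular this class is closed
under infima of decreasing sequences bounded below. Since `S ↦ E[arctan S]` is bounded and
strictly increasing for the almost sure order, the Brezis–Browder principle then gives a minimal
element below any given one. -/

open Filter Topology TopologicalSpace BoundedContinuousFunction

section OrderingPrinciple

/-- The Brezis–Browder ordering principle. -/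
theorem exists_le_forall_le_apply_eq {α : Type*} [Preorder α] {φ : α → ℝ} (hφ : Monotone φ)
    (hbdd : BddBelow (Set.range φ))
    (hseq : ∀ u : ℕ → α, Antitone u → BddBelow (Set.range u)) (a : α) :
    ∃ b ≤ a, ∀ c ≤ b, φ c = φ b := by
  have almost_minimizer (n : ℕ) (x : α) :
      ∃ y ≤ x, ∀ c ≤ x, φ y < φ c + 1 / ((n : ℝ) + 1) := by
    obtain ⟨_, ⟨y, hyx, rfl⟩, hy⟩ := exists_lt_of_csInf_lt (Set.nonempty_Iic.image φ)
      (lt_add_of_pos_right (sInf (φ '' Set.Iic x)) (Nat.one_div_pos_of_nat (n := n)))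
    refine ⟨y, hyx, fun c hc => hy.trans_le ?_⟩
    gcongr
    exact csInf_le (hbdd.mono (Set.image_subset_range _ _)) ⟨c, hc, rfl⟩
  choose next next_le next_lt using almost_minimizer
  let u : ℕ → α := fun n => n.rec a next
  obtain ⟨b, hb⟩ := hseq u (antitone_nat_of_succ_le fun n => next_le n (u n))
  have hbu (n : ℕ) : b ≤ u n := hb ⟨n, rfl⟩
  refine ⟨b, hbu 0, fun c hc => (hφ hc).antisymm ?_⟩
  have hlim : Tendsto (fun n : ℕ => φ c + 1 / ((n : ℝ) + 1)) atTop (𝓝 (φ c)) := by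
    simpa only [add_zero] using tendsto_one_div_add_atTop_nhds_zero_nat.const_add (φ c)
  exact ge_of_tendsto' hlim fun n =>
    (hφ (hbu (n + 1))).trans (next_lt n (u n) c (hc.trans (hbu n))).le

theorem integrable_arctan_comp {Ω : Type*} [MeasurableSpace Ω] {μ : Measure Ω} [IsFiniteMeasure μ]
    {f : Ω → ℝ} (hf : AEMeasurable f μ) : Integrable (fun ω => Real.arctan (f ω)) μ :=
  .of_bound (Real.measurable_arctan.comp_aemeasurable hf).aestronglyMeasurable (Real.pi / 2)
    (.of_forall fun _ => abs_le.2
      ⟨(Real.neg_pi_div_two_lt_arctan _).le, (Real.arctan_lt_pi_div_two _).le⟩)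

theorem exists_ae_le_forall_ae_le_ae_eq {Ω : Type*} [MeasurableSpace Ω] {μ : Measure Ω}
    [IsFiniteMeasure μ] {C : Set (Ω → ℝ)} (hmeas : ∀ f ∈ C, AEMeasurable f μ)
    (hseq : ∀ u : ℕ → Ω → ℝ, (∀ n, u n ∈ C) → (∀ᵐ ω ∂μ, Antitone fun n => u n ω) →
      ∃ g ∈ C, ∀ n, g ≤ᵐ[μ] u n) {f : Ω → ℝ} (hf : f ∈ C) :
    ∃ g ∈ C, g ≤ᵐ[μ] f ∧ ∀ h ∈ C, h ≤ᵐ[μ] g → h =ᵐ[μ] g := by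
  let mean (h : C) : ℝ := ∫ ω, Real.arctan (h.1 ω) ∂μ
  have hint (h : C) : Integrable (fun ω => Real.arctan (h.1 ω)) μ :=
    integrable_arctan_comp (hmeas h h.2)
  have arctan_le {g h : C} (hgh : g.1 ≤ᵐ[μ] h.1) :
      ∀ᵐ ω ∂μ, Real.arctan (g.1 ω) ≤ Real.arctan (h.1 ω) :=
    hgh.mono fun _ hω => Real.arctan_strictMono.monotone hω
  have hbdd : BddBelow (Set.range mean) :=
    ⟨∫ _, -(Real.pi / 2) ∂μ, Set.forall_mem_range.2 fun h => integral_mono (integrable_const _)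
      (hint h) fun _ => (Real.neg_pi_div_two_lt_arctan _).le⟩
  -- `C` already carries the pointwise order as a subtype, so the a.e. order is passed explicitly.
  obtain ⟨g, hgf, hg⟩ := @exists_le_forall_le_apply_eq C
    (.lift fun h => (h.1 : Germ (ae μ) ℝ)) mean
    (fun g h hgh => integral_mono_ae (hint g) (hint h) (arctan_le hgh)) hbdd
    (fun u hu => by
      have hanti : ∀ᵐ ω ∂μ, ∀ n, (u (n + 1)).1 ω ≤ (u n).1 ω :=
        ae_all_iff.2 fun n => hu n.le_succ
      obtain ⟨g, hgC, hg⟩ := hseq (fun n => u n) (fun n => (u n).2)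
        (hanti.mono fun _ hω => antitone_nat_of_succ_le hω)
      exact ⟨⟨g, hgC⟩, Set.forall_mem_range.2 hg⟩)
    ⟨f, hf⟩
  refine ⟨g, g.2, hgf, fun h hC hhg => ?_⟩
  have harctan := (integral_eq_iff_of_ae_le (hint ⟨h, hC⟩) (hint g) (arctan_le hhg)).1
    (hg ⟨h, hC⟩ hhg)
  exact harctan.mono fun _ hω => Real.arctan_injective hω

end OrderingPrinciple

section AlmostSureLimits

variable {ι Ω E F : Type*} [MeasurableSpace Ω] {P : Measure Ω} [IsProbabilityMeasure P]
  {l : Filter ι} [l.NeBot] [l.IsCountablyGenerated]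
  [TopologicalSpace E] [PseudoMetrizableSpace E] [MeasurableSpace E] [BorelSpace E]
  [TopologicalSpace F] [PseudoMetrizableSpace F] [MeasurableSpace F] [BorelSpace F]

theorem hasLaw_of_tendsto_ae {X : ι → Ω → E} {Y : Ω → E} {μ : Measure E}
    (hX : ∀ i, HasLaw (X i) μ P) (hlim : ∀ᵐ ω ∂P, Tendsto (fun i => X i ω) l (𝓝 (Y ω))) :
    HasLaw Y μ P := by
  obtain ⟨i₀⟩ := l.nonempty_of_neBot
  have hmeas (i : ι) : AEMeasurable (X i) P := (hX i).aemeasurable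
  have hY : AEMeasurable Y P := aemeasurable_of_tendsto_metrizable_ae l hmeas hlim
  have hconst : TendstoInDistribution X l (X i₀) (fun _ => P) P :=
    tendstoInDistribution_of_identDistrib i₀ (fun i => (hX i₀).identDistrib (hX i))
      (.refl (hmeas i₀))
  exact ⟨hY, (tendstoInDistribution_unique X
    (tendstoInDistribution_of_ae_tendsto hmeas hY hlim) hconst).trans (hX i₀).map_eq⟩

theorem indepFun_of_tendsto_ae {X : ι → Ω → E} {Y : Ω → E} {U : ι → Ω → F} {V : Ω → F}
    (hX : ∀ i, AEMeasurable (X i) P) (hU : ∀ i, AEMeasurable (U i) P)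
    (hXY : ∀ᵐ ω ∂P, Tendsto (fun i => X i ω) l (𝓝 (Y ω)))
    (hUV : ∀ᵐ ω ∂P, Tendsto (fun i => U i ω) l (𝓝 (V ω)))
    (hind : ∀ i, IndepFun (X i) (U i) P) : IndepFun Y V P := by
  have hfX (f : E →ᵇ ℝ) (i : ι) : AEStronglyMeasurable (fun ω => f (X i ω)) P :=
    (f.continuous.measurable.comp_aemeasurable (hX i)).aestronglyMeasurable
  have hgU (g : F →ᵇ ℝ) (i : ι) : AEStronglyMeasurable (fun ω => g (U i ω)) P :=
    (g.continuous.measurable.comp_aemeasurable (hU i)).aestronglyMeasurable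
  have hprod (f : E →ᵇ ℝ) (g : F →ᵇ ℝ) :
      Tendsto (fun i => ∫ ω, f (X i ω) * g (U i ω) ∂P) l (𝓝 (∫ ω, f (Y ω) * g (V ω) ∂P)) := by
    refine tendsto_integral_filter_of_norm_le_const (.of_forall fun i => (hfX f i).mul (hgU g i))
      ⟨‖f‖ * ‖g‖, .of_forall fun i => .of_forall fun ω => ?_⟩ ?_
    · rw [norm_mul]
      gcongr <;> exact BoundedContinuousFunction.norm_coe_le_norm _ _
    · filter_upwards [hXY, hUV] with ω hXω hUω
      exact ((f.continuous.tendsto _).comp hXω).mul ((g.continuous.tendsto _).comp hUω)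
  refine indepFun_of_bcf (aemeasurable_of_tendsto_metrizable_ae l hX hXY)
    (aemeasurable_of_tendsto_metrizable_ae l hU hUV)
    fun f g => tendsto_nhds_unique (hprod f g) ?_
  have hfactor (i : ι) : ∫ ω, f (X i ω) * g (U i ω) ∂P =
      (∫ ω, f (X i ω) ∂P) * ∫ ω, g (U i ω) ∂P :=
    ((hind i).comp f.continuous.measurable
      g.continuous.measurable).integral_fun_mul_eq_mul_integral (hfX f i) (hgU g i)
  simpa [hfactor] using (hprod f 1).mul (hprod 1 g)

theorem process_indepFun_of_tendsto_ae {τ : Type*} {E : τ → Type*}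
    [∀ t, TopologicalSpace (E t)] [∀ t, PseudoMetrizableSpace (E t)]
    [∀ t, SecondCountableTopology (E t)] [∀ t, MeasurableSpace (E t)] [∀ t, BorelSpace (E t)]
    {X : ι → (t : τ) → Ω → E t} {Y : (t : τ) → Ω → E t} {U : ι → Ω → F} {V : Ω → F}
    (hX : ∀ i t, AEMeasurable (X i t) P) (hU : ∀ i, AEMeasurable (U i) P)
    (hXY : ∀ t, ∀ᵐ ω ∂P, Tendsto (fun i => X i t ω) l (𝓝 (Y t ω)))
    (hUV : ∀ᵐ ω ∂P, Tendsto (fun i => U i ω) l (𝓝 (V ω)))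
    (hind : ∀ i, IndepFun (fun ω t => X i t ω) (U i) P) : IndepFun (fun ω t => Y t ω) V P := by
  refine IndepFun.process_indepFun₀
    (fun t => aemeasurable_of_tendsto_metrizable_ae l (hX · t) (hXY t))
    (aemeasurable_of_tendsto_metrizable_ae l hU hUV) fun I => ?_
  refine indepFun_of_tendsto_ae (X := fun i ω (t : I) => X i t ω)
    (fun i => aemeasurable_pi_lambda _ fun t => hX i t) hU ?_ hUV fun i =>
      (hind i).comp (Finset.measurable_restrict I) measurable_id
  filter_upwards [ae_all_iff.2 fun t : I => hXY t] with ω hω using tendsto_pi_nhds.2 hω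

end AlmostSureLimits

section UnbiasedShifts

variable {ι Ω : Type*} [MeasurableSpace Ω] {P : Measure Ω} {B : ℝ → Ω → ℝ} {R T : Ω → ℝ}
  {ν : Measure ℝ} {l : Filter ι} [l.NeBot] [l.IsCountablyGenerated]

theorem IsTwoSidedBM.hasLaw_sub [IsProbabilityMeasure P] (hB : IsTwoSidedBM P B) {s t : ℝ}
    (hst : s ≤ t) : HasLaw (fun ω => B t ω - B s ω) (gaussianReal 0 (t - s).toNNReal) P := by
  refine ⟨(hB.aemeas t).sub (hB.aemeas s), ?_⟩
  rcases hst.lt_or_eq with hlt | rfl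
  · exact hB.gaussIncr s t hlt
  · simp

theorem IsTwoSidedBM.of_tendsto_ae [IsProbabilityMeasure P] {X : ι → ℝ → Ω → ℝ}
    (hX : ∀ i, IsTwoSidedBM P (X i))
    (hlim : ∀ t, ∀ᵐ ω ∂P, Tendsto (fun i => X i t ω) l (𝓝 (B t ω)))
    (hcont : ∀ᵐ ω ∂P, Continuous fun t => B t ω) : IsTwoSidedBM P B := by
  have hsub (s t : ℝ) :
      ∀ᵐ ω ∂P, Tendsto (fun i => X i t ω - X i s ω) l (𝓝 (B t ω - B s ω)) := by
    filter_upwards [hlim s, hlim t] with ω hs ht using ht.sub hs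
  have hlaw {s t : ℝ} (hst : s ≤ t) :
      HasLaw (fun ω => B t ω - B s ω) (gaussianReal 0 (t - s).toNNReal) P :=
    hasLaw_of_tendsto_ae (fun i => (hX i).hasLaw_sub hst) (hsub s t)
  refine ⟨fun t => aemeasurable_of_tendsto_metrizable_ae l (fun i => (hX i).aemeas t) (hlim t),
    hcont, ?_, fun n t ht => ?_, fun s t hst => (hlaw hst.le).map_eq⟩
  · have hdirac (i : ι) : HasLaw (X i 0) (.dirac 0) P :=
      (HasLaw.mk aemeasurable_const (by simp)).congr (hX i).zero
    exact (hasLaw_of_tendsto_ae (l := l) hdirac (hlim 0)).ae_eq_of_dirac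
  · have hle (j : Fin n) : t j.castSucc ≤ t j.succ := ht (Fin.castSucc_le_succ j)
    refine (iIndepFun_iff_hasLaw_pi_pi fun j => hlaw (hle j)).2 ?_
    refine hasLaw_of_tendsto_ae (l := l) (fun i =>
      ((hX i).indepIncr n t ht).hasLaw_pi fun j => (hX i).hasLaw_sub (hle j)) ?_
    filter_upwards [ae_all_iff.2 fun j : Fin n => hsub (t j.castSucc) (t j.succ)] with ω hω
      using tendsto_pi_nhds.2 hω

theorem IsRandomTime.aemeasurable (hT : IsRandomTime B T) (hB : ∀ t, AEMeasurable (B t) P) :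
    AEMeasurable T P := by
  -- `ω ↦ (t ↦ B t ω)` need not be a.e. measurable: uncountably many null sets are involved.
  have hpath : @Measurable (NullMeasurableSpace Ω P) (ℝ → ℝ) _ _ (fun ω t => B t ω) :=
    measurable_pi_iff.2 fun t => (hB t).nullMeasurable
  refine NullMeasurable.aemeasurable fun s hs => ?_
  obtain ⟨A, hA, hTA⟩ := hT hs
  exact hTA ▸ hpath hA

theorem IsRandomTime.iInf [Countable ι] {S : ι → Ω → ℝ} (hS : ∀ i, IsRandomTime B (S i)) :
    IsRandomTime B fun ω => ⨅ i, S i ω :=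
  @Measurable.iInf _ _ _ _ _ (.comap (fun ω t => B t ω) inferInstance) _ _ _ _ _ _ hS

theorem IsUnbiasedShift.ae_continuous (hT : IsUnbiasedShift P B T) :
    ∀ᵐ ω ∂P, Continuous fun t => B t ω := by
  filter_upwards [hT.2.1.cont] with ω hω
  simpa [Function.comp_def] using (hω.comp (continuous_sub_right (T ω))).add_const (B (T ω) ω)

theorem Embeds.hasLaw [NeZero ν] (hT : Embeds P B T ν) : HasLaw (fun ω => B (T ω) ω) ν P :=
  ⟨.of_map_ne_zero (hT ▸ NeZero.ne ν), hT⟩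

theorem Embeds.of_tendsto_ae [IsProbabilityMeasure P] [NeZero ν] {S : ι → Ω → ℝ}
    (hS : ∀ i, Embeds P B (S i) ν) (hcont : ∀ᵐ ω ∂P, Continuous fun t => B t ω)
    (hlim : ∀ᵐ ω ∂P, Tendsto (fun i => S i ω) l (𝓝 (R ω))) : Embeds P B R ν := by
  refine (hasLaw_of_tendsto_ae (l := l) (fun i => (hS i).hasLaw) ?_).map_eq
  filter_upwards [hcont, hlim] with ω hB hSR using (hB.tendsto _).comp hSR

theorem IsUnbiasedShift.of_tendsto_ae [IsProbabilityMeasure P] {S : ι → Ω → ℝ}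
    (hS : ∀ i, IsUnbiasedShift P B (S i)) (hmeas : ∀ i, AEMeasurable (fun ω => B (S i ω) ω) P)
    (hR : IsRandomTime B R) (hlim : ∀ᵐ ω ∂P, Tendsto (fun i => S i ω) l (𝓝 (R ω))) :
    IsUnbiasedShift P B R := by
  obtain ⟨i₀⟩ := l.nonempty_of_neBot
  have hcont := (hS i₀).ae_continuous
  have hvalue : ∀ᵐ ω ∂P, Tendsto (fun i => B (S i ω) ω) l (𝓝 (B (R ω) ω)) := by
    filter_upwards [hcont, hlim] with ω hB hSR using (hB.tendsto _).comp hSR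
  have hshift (t : ℝ) : ∀ᵐ ω ∂P, Tendsto (fun i => B (S i ω + t) ω - B (S i ω) ω) l
      (𝓝 (B (R ω + t) ω - B (R ω) ω)) := by
    filter_upwards [hcont, hlim] with ω hB hSR
    exact ((hB.tendsto _).comp (hSR.add_const t)).sub ((hB.tendsto _).comp hSR)
  refine ⟨hR, .of_tendsto_ae (fun i => (hS i).2.1) hshift ?_,
    process_indepFun_of_tendsto_ae (fun i => (hS i).2.1.aemeas) hmeas hshift hvalue
      fun i => (hS i).2.2⟩
  filter_upwards [hcont] with ω hB
  fun_prop

theorem exists_isUnbiasedShift_embeds_ae_le [IsProbabilityMeasure P] [NeZero ν]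
    {S : ℕ → Ω → ℝ} {L : Ω → ℝ} (hS : ∀ n, IsUnbiasedShift P B (S n))
    (hSν : ∀ n, Embeds P B (S n) ν) (hL : ∀ n, L ≤ᵐ[P] S n)
    (hanti : ∀ᵐ ω ∂P, Antitone fun n => S n ω) :
    ∃ R, IsUnbiasedShift P B R ∧ Embeds P B R ν ∧ L ≤ᵐ[P] R ∧ ∀ n, R ≤ᵐ[P] S n := by
  have hbdd : ∀ᵐ ω ∂P, BddBelow (Set.range fun n => S n ω) := by
    filter_upwards [ae_all_iff.2 hL] with ω hω using ⟨L ω, Set.forall_mem_range.2 hω⟩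
  have hlim : ∀ᵐ ω ∂P, Tendsto (fun n => S n ω) atTop (𝓝 (⨅ n, S n ω)) := by
    filter_upwards [hanti, hbdd] with ω using tendsto_atTop_ciInf
  refine ⟨fun ω => ⨅ n, S n ω,
    .of_tendsto_ae hS (fun n => (hSν n).hasLaw.aemeasurable) (.iInf fun n => (hS n).1) hlim,
    .of_tendsto_ae hSν (hS 0).ae_continuous hlim, ?_, fun n => ?_⟩
  · filter_upwards [ae_all_iff.2 hL] with ω hω using le_ciInf hω
  · filter_upwards [hbdd] with ω hω using ciInf_le hω n

end UnbiasedShifts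

theorem exists_minimal_unbiased_shift_general {Ω : Type*} [MeasurableSpace Ω]
    {P : Measure Ω} [IsProbabilityMeasure P] {B : ℝ → Ω → ℝ} (hB : ∀ t, AEMeasurable (B t) P)
    {ν : Measure ℝ} [IsProbabilityMeasure ν] {L T : Ω → ℝ}
    (hT : IsUnbiasedShift P B T) (hTν : Embeds P B T ν) (hLT : ∀ᵐ ω ∂P, L ω ≤ T ω) :
    ∃ Tstar : Ω → ℝ, IsUnbiasedShift P B Tstar ∧ Embeds P B Tstar ν ∧
      (∀ᵐ ω ∂P, L ω ≤ Tstar ω ∧ Tstar ω ≤ T ω) ∧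
      (∀ S : Ω → ℝ, IsUnbiasedShift P B S →
        (∀ᵐ ω ∂P, L ω ≤ S ω ∧ S ω ≤ Tstar ω) →
        P.map (fun ω => B (S ω) ω) = P.map (fun ω => B (Tstar ω) ω) →
        ∀ᵐ ω ∂P, S ω = Tstar ω) := by
  obtain ⟨Tstar, ⟨hshift, hembeds, hLTstar⟩, hTstarT, hmin⟩ :=
    exists_ae_le_forall_ae_le_ae_eq (μ := P)
      (C := {S | IsUnbiasedShift P B S ∧ Embeds P B S ν ∧ L ≤ᵐ[P] S})
      (fun S hS => hS.1.1.aemeasurable hB)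
      (fun u hu hanti => by
        obtain ⟨R, hR, hRν, hLR, hRu⟩ := exists_isUnbiasedShift_embeds_ae_le
          (fun n => (hu n).1) (fun n => (hu n).2.1) (fun n => (hu n).2.2) hanti
        exact ⟨R, ⟨hR, hRν, hLR⟩, hRu⟩)
      ⟨hT, hTν, hLT⟩
  refine ⟨Tstar, hshift, hembeds, hLTstar.and hTstarT, fun S hS hLS hmap => ?_⟩
  exact hmin S ⟨hS, hmap.trans hembeds, hLS.mono fun _ h => h.1⟩ (hLS.mono fun _ h => h.2)

/-- any nonnegative unbiased shift embedding `ν` dominates a minimal unbiased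
shift embedding `ν`: there is `T*` with `P₀{0 ≤ T* ≤ T} = 1` such that any unbiased shift `S`
with `P₀{0 ≤ S ≤ T*} = 1` and `B_S ∼ B_{T*}` satisfies `P₀{S = T*} = 1`. -/
theorem exists_minimal_unbiased_shift {Ω : Type*} [MeasurableSpace Ω]
    (P : Measure Ω) [IsProbabilityMeasure P]
    (B : ℝ → Ω → ℝ) (hB : IsTwoSidedBM P B)
    (ν : Measure ℝ) [IsProbabilityMeasure ν]
    (T : Ω → ℝ) (hT : IsUnbiasedShift P B T) (hTν : Embeds P B T ν)
    (hT0 : ∀ᵐ ω ∂P, 0 ≤ T ω) :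
    ∃ Tstar : Ω → ℝ, IsUnbiasedShift P B Tstar ∧ Embeds P B Tstar ν ∧
      (∀ᵐ ω ∂P, 0 ≤ Tstar ω ∧ Tstar ω ≤ T ω) ∧
      (∀ S : Ω → ℝ, IsUnbiasedShift P B S →
        (∀ᵐ ω ∂P, 0 ≤ S ω ∧ S ω ≤ Tstar ω) →
        Measure.map (fun ω => B (S ω) ω) P = Measure.map (fun ω => B (Tstar ω) ω) P →
        ∀ᵐ ω ∂P, S ω = Tstar ω) :=
  exists_minimal_unbiased_shift_general hB.aemeas hT hTν hT0
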